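/- arXiv:1810.03817 — 4 statements merged into one kernel-verified Lean document; each statement's English description precedes it below -/
import Mathlib

section
/- Let P ≥ 2 and let x_1,…,x_N be any points of X. Then the empirical Rademacher complexity of the class F̂_M satisfies R̂(F̂_M) ≤ B·C·√(3⌈log P⌉/N), where log denotes the natural logarithm and ⌈·⌉ the ceiling function. (Lemma 1 of the paper; since the bound holds for every sample, the same bound holds for the Rademacher complexity R(F̂_M) obtained by averaging over the data.) -/
/-- The class `F̂_M` of functions `x ↦ ∑_{p=1}^P ∑_{m=1}^{M_p} θ_{p,m} √(ν_p) φ_{p,m}(x)`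
with `∑_p M_p = M`, `‖θ‖₂ ≤ C`, and `ν` in the probability simplex `Δ_P`. -/
def FhatM {X : Type*} (P : ℕ) (φ : Fin P → ℕ → X → ℝ) (C : ℝ) (M : ℕ) : Set (X → ℝ) :=
  {f | ∃ (Mp : Fin P → ℕ) (θ : Fin P → ℕ → ℝ) (ν : Fin P → ℝ),
    (∑ p, Mp p) = M ∧ (∀ p, 0 ≤ ν p) ∧ (∑ p, ν p) = 1 ∧
    (∑ p, ∑ m ∈ Finset.range (Mp p), (θ p m) ^ 2) ≤ C ^ 2 ∧
    ∀ x, f x = ∑ p, ∑ m ∈ Finset.range (Mp p), θ p m * Real.sqrt (ν p) * φ p m x}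

/-- Empirical Rademacher complexity of a class `F` of real-valued functions, for the
sample `x_1, …, x_N`:  `(1/N)·2^{-N} ∑_{σ ∈ {-1,1}^N} sup_{f ∈ F} ∑_n σ_n f(x_n)`. -/
noncomputable def empRad {X : Type*} (N : ℕ) (F : Set (X → ℝ)) (xs : Fin N → X) : ℝ :=
  (1 / ((N : ℝ) * 2 ^ N)) *
    ∑ σ : Fin N → Bool,
      sSup ((fun f => ∑ n, (if σ n then (1 : ℝ) else -1) * f (xs n)) '' F)

/-- Trapezoid inequality for powers: `(s + t) (s ^ m - t ^ m) ≤ m (s - t) (s ^ m + t ^ m)`. -/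
lemma add_mul_pow_sub_pow_le {s t : ℝ} (ht : 0 ≤ t) (hts : t ≤ s) (m : ℕ) :
    (s + t) * (s ^ m - t ^ m) ≤ m * (s - t) * (s ^ m + t ^ m) := by
  induction m with
  | zero => simp
  | succ m ih =>
    have hpow : t ^ m ≤ s ^ m := pow_le_pow_left₀ ht hts m
    have hcheb : 0 ≤ (s - t) * (s ^ m - t ^ m) :=
      mul_nonneg (sub_nonneg.2 hts) (sub_nonneg.2 hpow)
    have hstep := mul_le_mul_of_nonneg_left ih (show 0 ≤ s + t by linarith)
    have hcheb' := mul_nonneg (mul_nonneg (by positivity : (0 : ℝ) ≤ (m : ℝ) + 1)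
      (sub_nonneg.2 hts)) hcheb
    push_cast
    rw [pow_succ, pow_succ]
    nlinarith

lemma sq_sub_sq_mul_pow_sub_pow_le {s t : ℝ} (hs : 0 ≤ s) (ht : 0 ≤ t) (m : ℕ) :
    (s ^ 2 - t ^ 2) * (s ^ m - t ^ m) ≤ m * (s - t) ^ 2 * (s ^ m + t ^ m) := by
  wlog hts : t ≤ s generalizing s t
  · have := this ht hs (le_of_not_ge hts)
    linarith
  have := mul_le_mul_of_nonneg_left (add_mul_pow_sub_pow_le ht hts m) (sub_nonneg.2 hts)
  linarith

section Khintchine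

variable {E : Type*} [NormedAddCommGroup E] [InnerProductSpace ℝ E]

open scoped RealInnerProductSpace

lemma inner_sub_mul_norm_pow_le (u w : E) (k : ℕ) :
    ⟪u - w, u⟫ * ‖u‖ ^ (2 * k) - ⟪u - w, w⟫ * ‖w‖ ^ (2 * k) ≤
      (2 * k + 1) / 2 * ‖u - w‖ ^ 2 * (‖u‖ ^ (2 * k) + ‖w‖ ^ (2 * k)) := by
  have hpow := sq_sub_sq_mul_pow_sub_pow_le (norm_nonneg u) (norm_nonneg w) (2 * k)
  have hdist : (‖u‖ - ‖w‖) ^ 2 ≤ ‖u - w‖ ^ 2 :=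
    sq_le_sq' (by linarith [norm_sub_rev u w, norm_sub_norm_le w u]) (norm_sub_norm_le u w)
  have hdist' := mul_le_mul_of_nonneg_left hdist
    (by positivity : 0 ≤ (2 * k : ℝ) * (‖u‖ ^ (2 * k) + ‖w‖ ^ (2 * k)))
  have hnorm := norm_sub_sq_real u w
  have hu : ⟪u - w, u⟫ = (‖u - w‖ ^ 2 + ‖u‖ ^ 2 - ‖w‖ ^ 2) / 2 := by
    rw [inner_sub_left, real_inner_self_eq_norm_sq, real_inner_comm, hnorm]
    ring
  have hw : ⟪u - w, w⟫ = (‖u‖ ^ 2 - ‖w‖ ^ 2 - ‖u - w‖ ^ 2) / 2 := by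
    rw [inner_sub_left, real_inner_self_eq_norm_sq, hnorm]
    ring
  rw [hu, hw]
  push_cast at hpow
  linarith

/-- The sum `∑ n, ± v n`, with signs given by `σ`. -/
def signedSum {N : ℕ} (v : Fin N → E) (σ : Fin N → Bool) : E :=
  ∑ n, (if σ n then (1 : ℝ) else -1) • v n

/-- Flipping the `n`-th sign. -/
def flipSign {N : ℕ} (n : Fin N) (σ : Fin N → Bool) : Fin N → Bool :=
  Function.update σ n (!σ n)

lemma flipSign_involutive {N : ℕ} (n : Fin N) : Function.Involutive (flipSign n) := by
  intro σ
  simp [flipSign]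

lemma signedSum_sub_flipSign {N : ℕ} (v : Fin N → E) (n : Fin N) (σ : Fin N → Bool) :
    signedSum v σ - signedSum v (flipSign n σ) =
      (2 : ℝ) • (if σ n then (1 : ℝ) else -1) • v n := by
  unfold signedSum
  rw [← Finset.sum_sub_distrib, Finset.sum_eq_single n]
  · rw [← sub_smul, smul_smul]
    cases h : σ n <;> norm_num [flipSign, h]
  · intro j _ hj
    simp [flipSign, hj]
  · simp

lemma sum_flipSign {N : ℕ} (n : Fin N) (f : (Fin N → Bool) → ℝ) :
    ∑ σ, f (flipSign n σ) = ∑ σ, f σ :=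
  Equiv.sum_comp (flipSign_involutive n).toPerm f

lemma sum_inner_mul_norm_signedSum_pow_le {N : ℕ} (v : Fin N → E) (n : Fin N) (k : ℕ) :
    ∑ σ, ⟪(if σ n then (1 : ℝ) else -1) • v n, signedSum v σ⟫ * ‖signedSum v σ‖ ^ (2 * k) ≤
      (2 * k + 1) * ‖v n‖ ^ 2 * ∑ σ, ‖signedSum v σ‖ ^ (2 * k) := by
  set g : (Fin N → Bool) → ℝ := fun σ =>
    ⟪(if σ n then (1 : ℝ) else -1) • v n, signedSum v σ⟫ * ‖signedSum v σ‖ ^ (2 * k) with hg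
  set h : (Fin N → Bool) → ℝ := fun σ =>
    (2 * k + 1) * ‖v n‖ ^ 2 * ‖signedSum v σ‖ ^ (2 * k) with hh
  have hpair : ∀ σ, g σ + g (flipSign n σ) ≤ h σ + h (flipSign n σ) := by
    intro σ
    have hle := inner_sub_mul_norm_pow_le (signedSum v σ) (signedSum v (flipSign n σ)) k
    have hflip : (if flipSign n σ n then (1 : ℝ) else -1) = -(if σ n then (1 : ℝ) else -1) := by
      cases hσ : σ n <;> simp [flipSign, hσ]
    have hnorm : ‖(2 : ℝ) • (if σ n then (1 : ℝ) else -1) • v n‖ = 2 * ‖v n‖ := by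
      cases σ n <;> simp [norm_smul]
    rw [signedSum_sub_flipSign, hnorm] at hle
    simp only [inner_smul_left _ _ (2 : ℝ), conj_trivial] at hle
    simp only [hg, hh, hflip, neg_smul, inner_neg_left]
    linarith
  have hsum := Finset.sum_le_sum fun σ (_ : σ ∈ Finset.univ) => hpair σ
  rw [Finset.sum_add_distrib, Finset.sum_add_distrib, sum_flipSign, sum_flipSign] at hsum
  rw [Finset.mul_sum]
  linarith

lemma sum_norm_signedSum_pow_succ_le {N : ℕ} (v : Fin N → E) (k : ℕ) :
    ∑ σ, ‖signedSum v σ‖ ^ (2 * (k + 1)) ≤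
      (2 * k + 1) * (∑ n, ‖v n‖ ^ 2) * ∑ σ, ‖signedSum v σ‖ ^ (2 * k) := by
  have hexpand : ∀ σ, ‖signedSum v σ‖ ^ (2 * (k + 1)) =
      ∑ n, ⟪(if σ n then (1 : ℝ) else -1) • v n, signedSum v σ⟫ *
        ‖signedSum v σ‖ ^ (2 * k) := by
    intro σ
    rw [← Finset.sum_mul, ← sum_inner, ← signedSum, real_inner_self_eq_norm_sq]
    ring
  rw [Finset.sum_congr rfl fun σ _ => hexpand σ, Finset.sum_comm,
    Finset.mul_sum (f := fun n => ‖v n‖ ^ 2), Finset.sum_mul]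
  exact Finset.sum_le_sum fun n _ => sum_inner_mul_norm_signedSum_pow_le v n k

lemma two_mul_add_one_mul_pow_le (r : ℕ) : (2 * r + 1) * r ^ r ≤ (r + 1) ^ (r + 1) := by
  rcases Nat.eq_zero_or_pos r with rfl | hr
  · simp
  have hbern : r ^ r + r * r ^ (r - 1) ≤ (r + 1) ^ r := by
    have := pow_add_mul_le_add_pow (a := r) (b := 1) (Nat.zero_le _) (by simp) r
    simpa using this
  rw [mul_pow_sub_one hr.ne'] at hbern
  rw [pow_succ]
  nlinarith [Nat.zero_le (r ^ r)]

/-- Khintchine inequality for even moments of Rademacher sums in an inner product space. -/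
lemma sum_norm_signedSum_pow_le {N : ℕ} (v : Fin N → E) (r : ℕ) :
    ∑ σ, ‖signedSum v σ‖ ^ (2 * r) ≤ 2 ^ N * (r * ∑ n, ‖v n‖ ^ 2) ^ r := by
  have hV : 0 ≤ ∑ n, ‖v n‖ ^ 2 := Finset.sum_nonneg fun _ _ => by positivity
  induction r with
  | zero => simp
  | succ r ih =>
    have hr : ((2 * r + 1) * r ^ r : ℝ) ≤ (r + 1) ^ (r + 1) := by
      exact_mod_cast two_mul_add_one_mul_pow_le r
    calc ∑ σ, ‖signedSum v σ‖ ^ (2 * (r + 1))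
        ≤ (2 * r + 1) * (∑ n, ‖v n‖ ^ 2) * ∑ σ, ‖signedSum v σ‖ ^ (2 * r) :=
          sum_norm_signedSum_pow_succ_le v r
      _ ≤ (2 * r + 1) * (∑ n, ‖v n‖ ^ 2) * (2 ^ N * (r * ∑ n, ‖v n‖ ^ 2) ^ r) := by gcongr
      _ = 2 ^ N * (((2 * r + 1) * r ^ r) * (∑ n, ‖v n‖ ^ 2) ^ (r + 1)) := by ring
      _ ≤ 2 ^ N * ((r + 1) ^ (r + 1) * (∑ n, ‖v n‖ ^ 2) ^ (r + 1)) := by gcongr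
      _ = 2 ^ N * ((r + 1 : ℕ) * ∑ n, ‖v n‖ ^ 2) ^ (r + 1) := by
        push_cast
        rw [mul_pow]

/-- Maximal inequality for `P` Rademacher sums, each with variance proxy at most `V`. -/
lemma sum_le_of_le_norm_signedSum {N P : ℕ} (v : Fin P → Fin N → E) {V : ℝ}
    (hv : ∀ p, ∑ n, ‖v p n‖ ^ 2 ≤ V) {r : ℕ} (hr : r ≠ 0) (hPr : Real.log P ≤ r) (hP : P ≠ 0)
    (Z : (Fin N → Bool) → ℝ) (hZ0 : ∀ σ, 0 ≤ Z σ) (hZ : ∀ σ, ∃ p, Z σ ≤ ‖signedSum (v p) σ‖) :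
    ∑ σ, Z σ ≤ 2 ^ N * √(3 * r * V) := by
  have hPpos : (0 : ℝ) < P := by positivity
  have hV : 0 ≤ V := (Finset.sum_nonneg fun _ _ => by positivity).trans
    (hv ⟨0, Nat.pos_of_ne_zero hP⟩)
  have hPexp : (P : ℝ) ≤ 3 ^ r := by
    calc (P : ℝ) ≤ Real.exp r := (Real.log_le_iff_le_exp hPpos).1 hPr
      _ = Real.exp 1 ^ r := by rw [← Real.exp_nat_mul, mul_one]
      _ ≤ 3 ^ r := by
        gcongr
        linarith [Real.exp_one_lt_d9]
  have hpoint : ∀ σ, Z σ ^ (2 * r) ≤ ∑ p, ‖signedSum (v p) σ‖ ^ (2 * r) := by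
    intro σ
    obtain ⟨p, hp⟩ := hZ σ
    exact (pow_le_pow_left₀ (hZ0 σ) hp _).trans
      (Finset.single_le_sum (f := fun p => ‖signedSum (v p) σ‖ ^ (2 * r))
        (fun _ _ => by positivity) (Finset.mem_univ p))
  have hmoment : ∑ σ, Z σ ^ (2 * r) ≤ 2 ^ N * (3 * r * V) ^ r := by
    calc ∑ σ, Z σ ^ (2 * r) ≤ ∑ σ, ∑ p, ‖signedSum (v p) σ‖ ^ (2 * r) :=
          Finset.sum_le_sum fun σ _ => hpoint σ
      _ = ∑ p, ∑ σ, ‖signedSum (v p) σ‖ ^ (2 * r) := Finset.sum_comm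
      _ ≤ ∑ _p : Fin P, 2 ^ N * (r * V) ^ r := by
        refine Finset.sum_le_sum fun p _ => (sum_norm_signedSum_pow_le (v p) r).trans ?_
        have := hv p
        gcongr
      _ = P * (2 ^ N * (r * V) ^ r) := by simp
      _ ≤ 3 ^ r * (2 ^ N * (r * V) ^ r) := by gcongr
      _ = 2 ^ N * (3 * r * V) ^ r := by rw [mul_assoc 3, mul_pow 3]; ring
  have hjensen : (∑ σ, Z σ / 2 ^ N) ^ (2 * r) ≤ ∑ σ, Z σ ^ (2 * r) / 2 ^ N := by
    have := Real.pow_arith_mean_le_arith_mean_pow Finset.univ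
      (fun _ : Fin N → Bool => (1 / 2 ^ N : ℝ)) Z (fun _ _ => by positivity) (by simp)
      (fun σ _ => hZ0 σ) (2 * r)
    simpa only [one_div_mul_eq_div] using this
  rw [← Finset.sum_div, ← Finset.sum_div] at hjensen
  have hmean : ((∑ σ, Z σ) / 2 ^ N) ^ (2 * r) ≤ (√(3 * r * V)) ^ (2 * r) := by
    rw [pow_mul √_, Real.sq_sqrt (by positivity)]
    refine hjensen.trans ((div_le_iff₀ (by positivity)).2 ?_)
    linarith
  have := le_of_pow_le_pow_left₀ (by positivity) (Real.sqrt_nonneg _) hmean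
  rw [div_le_iff₀ (by positivity)] at this
  linarith

end Khintchine

/-- The first `M` features of `φ`, as a vector of Euclidean space. -/
noncomputable def truncatedFeature {X : Type*} (M : ℕ) (φ : ℕ → X → ℝ) (x : X) :
    EuclideanSpace ℝ (Fin M) :=
  WithLp.toLp 2 fun m => φ m x

lemma norm_truncatedFeature_sq_le {X : Type*} (M : ℕ) (φ : ℕ → X → ℝ) (x : X)
    (hφ : Summable fun m => φ m x ^ 2) :
    ‖truncatedFeature M φ x‖ ^ 2 ≤ ∑' m, φ m x ^ 2 := by
  rw [EuclideanSpace.real_norm_sq_eq]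
  simp only [truncatedFeature]
  rw [Fin.sum_univ_eq_sum_range (fun m => φ m x ^ 2)]
  exact hφ.sum_le_tsum _ fun _ _ => by positivity

lemma norm_signedSum_truncatedFeature_sq {X : Type*} {N : ℕ} (M : ℕ) (φ : ℕ → X → ℝ)
    (xs : Fin N → X) (σ : Fin N → Bool) :
    ‖signedSum (fun n => truncatedFeature M φ (xs n)) σ‖ ^ 2 =
      ∑ m ∈ Finset.range M, (∑ n, (if σ n then (1 : ℝ) else -1) * φ m (xs n)) ^ 2 := by
  rw [EuclideanSpace.real_norm_sq_eq, ← Fin.sum_univ_eq_sum_range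
    (fun m => (∑ n, (if σ n then (1 : ℝ) else -1) * φ m (xs n)) ^ 2)]
  simp [signedSum, truncatedFeature, -ite_smul, -ite_mul]

/-- Correlation of the signs `σ` with a member of `FhatM`, bounded through the largest
truncated feature sum. -/
lemma sum_sign_mul_le_of_mem_FhatM {X : Type*} {P M N : ℕ} {φ : Fin P → ℕ → X → ℝ} {C Z : ℝ}
    (hC : 0 ≤ C) (hZ0 : 0 ≤ Z) (xs : Fin N → X) (σ : Fin N → Bool)
    (hZ : ∀ p, ‖signedSum (fun n => truncatedFeature M (φ p) (xs n)) σ‖ ≤ Z)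
    {f : X → ℝ} (hf : f ∈ FhatM P φ C M) :
    ∑ n, (if σ n then (1 : ℝ) else -1) * f (xs n) ≤ C * Z := by
  obtain ⟨Mp, θ, ν, hM, hν0, hν1, hθ, hf⟩ := hf
  set S : Fin P → ℕ → ℝ := fun p m => ∑ n, (if σ n then (1 : ℝ) else -1) * φ p m (xs n) with hS
  have hswap : ∑ n, (if σ n then (1 : ℝ) else -1) * f (xs n) =
      ∑ p, ∑ m ∈ Finset.range (Mp p), θ p m * (√(ν p) * S p m) := by
    simp only [hf, hS, Finset.mul_sum]
    rw [Finset.sum_comm]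
    refine Finset.sum_congr rfl fun p _ => ?_
    rw [Finset.sum_comm]
    exact Finset.sum_congr rfl fun m _ => Finset.sum_congr rfl fun n _ => by ring
  have hblock : ∀ p, ∑ m ∈ Finset.range (Mp p), (√(ν p) * S p m) ^ 2 ≤ ν p * Z ^ 2 := by
    intro p
    have hMp : Mp p ≤ M := hM ▸ Finset.single_le_sum (fun _ _ => Nat.zero_le _) (Finset.mem_univ p)
    simp only [mul_pow, Real.sq_sqrt (hν0 p), ← Finset.mul_sum]
    refine mul_le_mul_of_nonneg_left ?_ (hν0 p)
    calc ∑ m ∈ Finset.range (Mp p), S p m ^ 2 ≤ ∑ m ∈ Finset.range M, S p m ^ 2 :=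
          Finset.sum_le_sum_of_subset_of_nonneg (Finset.range_mono hMp) fun _ _ _ => by positivity
      _ = ‖signedSum (fun n => truncatedFeature M (φ p) (xs n)) σ‖ ^ 2 :=
          (norm_signedSum_truncatedFeature_sq M (φ p) xs σ).symm
      _ ≤ Z ^ 2 := pow_le_pow_left₀ (norm_nonneg _) (hZ p) 2
  have htotal : ∑ p, ∑ m ∈ Finset.range (Mp p), (√(ν p) * S p m) ^ 2 ≤ Z ^ 2 := by
    calc _ ≤ ∑ p, ν p * Z ^ 2 := Finset.sum_le_sum fun p _ => hblock p
      _ = Z ^ 2 := by rw [← Finset.sum_mul, hν1, one_mul]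
  rw [hswap]
  refine le_of_sq_le_sq ?_ (by positivity)
  rw [mul_pow]
  refine le_trans ?_ (mul_le_mul hθ htotal (by positivity) (by positivity))
  simp only [Finset.sum_sigma']
  exact Finset.sum_mul_sq_le_sq_mul_sq _ _ _

/-- **Lemma 1**: for `P ≥ 2` and any sample `x_1, …, x_N`, the empirical Rademacher
complexity of `F̂_M` is at most `B·C·√(3⌈log P⌉/N)`. -/
theorem rademacher_bound_FhatM {X : Type*} (P M N : ℕ) (hP : 2 ≤ P)
    (φ : Fin P → ℕ → X → ℝ) (B C : ℝ) (hB : 0 ≤ B) (hC : 0 ≤ C)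
    (hφsum : ∀ p x, Summable fun m => (φ p m x) ^ 2)
    (hφB : ∀ p x, (∑' m, (φ p m x) ^ 2) ≤ B ^ 2)
    (xs : Fin N → X) :
    empRad N (FhatM P φ C M) xs ≤
      B * C * Real.sqrt (3 * ((⌈Real.log (P : ℝ)⌉ : ℤ) : ℝ) / N) := by
  rcases Nat.eq_zero_or_pos N with rfl | hN
  · simp [empRad]
  have hlog : 0 < Real.log P := Real.log_pos (by exact_mod_cast hP)
  obtain ⟨r, hr⟩ := Int.eq_ofNat_of_zero_le (Int.ceil_pos.2 hlog).le
  have hr0 : r ≠ 0 := by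
    have := Int.ceil_pos.2 hlog
    omega
  have hPr : Real.log P ≤ r := by
    have := Int.le_ceil (Real.log P)
    rw [hr] at this
    exact_mod_cast this
  rw [hr, Int.cast_natCast]
  set v : Fin P → Fin N → EuclideanSpace ℝ (Fin M) :=
    fun p n => truncatedFeature M (φ p) (xs n) with hv
  have hvar : ∀ p, ∑ n, ‖v p n‖ ^ 2 ≤ N * B ^ 2 := by
    intro p
    calc ∑ n, ‖v p n‖ ^ 2 ≤ ∑ _n : Fin N, B ^ 2 := Finset.sum_le_sum fun n _ =>
          (norm_truncatedFeature_sq_le M (φ p) (xs n) (hφsum p _)).trans (hφB p _)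
      _ = N * B ^ 2 := by simp
  have : Nonempty (Fin P) := ⟨⟨0, by omega⟩⟩
  choose q hq using fun σ => Finite.exists_max fun p => ‖signedSum (v p) σ‖
  have hmax := sum_le_of_le_norm_signedSum v hvar hr0 hPr (by omega)
    (fun σ => ‖signedSum (v (q σ)) σ‖) (fun _ => norm_nonneg _) (fun σ => ⟨q σ, le_rfl⟩)
  have hsup : ∀ σ : Fin N → Bool,
      sSup ((fun f => ∑ n, (if σ n then (1 : ℝ) else -1) * f (xs n)) '' FhatM P φ C M) ≤
        C * ‖signedSum (v (q σ)) σ‖ := by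
    refine fun σ => Real.sSup_le ?_ (by positivity)
    rintro _ ⟨f, hf, rfl⟩
    exact sum_sign_mul_le_of_mem_FhatM hC (norm_nonneg _) xs σ (hq σ) hf
  have hNpos : (0 : ℝ) < N := by exact_mod_cast hN
  have hsqrt : √(3 * r * (N * B ^ 2)) = N * (B * √(3 * r / N)) := by
    rw [show 3 * (r : ℝ) * (N * B ^ 2) = (N * B) ^ 2 * (3 * r / N) by field_simp,
      Real.sqrt_mul (by positivity), Real.sqrt_sq (by positivity), mul_assoc]
  rw [hsqrt] at hmax
  calc empRad N (FhatM P φ C M) xs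
      ≤ 1 / (N * 2 ^ N) * ∑ σ, C * ‖signedSum (v (q σ)) σ‖ :=
        mul_le_mul_of_nonneg_left (Finset.sum_le_sum fun σ _ => hsup σ) (by positivity)
    _ ≤ 1 / (N * 2 ^ N) * (C * (2 ^ N * (N * (B * √(3 * r / N))))) := by
        rw [← Finset.mul_sum]
        gcongr
    _ = B * C * √(3 * r / N) := by field_simp
end

section
/- Fix samples x_1,…,x_N ∈ X and an integer r ≥ 1, and for p ∈ {1,…,P}, m ≤ M_p let ψ_{p,m} ∈ ℝ^N denote the vector (φ_{p,m}(x_1),…,φ_{p,m}(x_N)). Suppose that for every allocation (M_1,…,M_P) with Σ_p M_p = M and every p, the Rademacher moment bound 2^{−N} Σ_{σ ∈ {−1,1}^N} ( Σ_{m=1}^{M_p} (ψ_{p,m}ᵀσ)² )^r ≤ ((23r/22)·N·B²)^r holds. Then the empirical Rademacher complexity of F̂_M satisfies R̂(F̂_M) ≤ (C·B/√N) · √(23r/22) · P^{1/(2r)}. (This is the moment-to-complexity step in the proof of Lemma 1, obtained via Hölder's and Jensen's inequalities.) -/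
/-- Cauchy–Schwarz for a weighted double sum: if every block sum of squares is at most `z ^ 2`,
then so is the average of the blocks, and the pairing with `θ` is at most `C * z`. -/
lemma sum_mul_sqrt_weight_le {ι : Type*} [Fintype ι] (Mp : ι → ℕ) (θ g : ι → ℕ → ℝ)
    (ν : ι → ℝ) {C z : ℝ} (hC : 0 ≤ C) (hz : 0 ≤ z) (hν : ∀ p, 0 ≤ ν p) (hν1 : ∑ p, ν p = 1)
    (hθ : ∑ p, ∑ m ∈ Finset.range (Mp p), θ p m ^ 2 ≤ C ^ 2)
    (hg : ∀ p, ∑ m ∈ Finset.range (Mp p), g p m ^ 2 ≤ z ^ 2) :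
    ∑ p, ∑ m ∈ Finset.range (Mp p), θ p m * (√(ν p) * g p m) ≤ C * z := by
  have hblock : ∑ p, ∑ m ∈ Finset.range (Mp p), (√(ν p) * g p m) ^ 2 ≤ z ^ 2 := by
    calc ∑ p, ∑ m ∈ Finset.range (Mp p), (√(ν p) * g p m) ^ 2
        = ∑ p, ν p * ∑ m ∈ Finset.range (Mp p), g p m ^ 2 := by
          simp only [mul_pow, Real.sq_sqrt (hν _), Finset.mul_sum]
      _ ≤ ∑ p, ν p * z ^ 2 :=
          Finset.sum_le_sum fun p _ => mul_le_mul_of_nonneg_left (hg p) (hν p)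
      _ = z ^ 2 := by rw [← Finset.sum_mul, hν1, one_mul]
  refine le_of_sq_le_sq ?_ (mul_nonneg hC hz)
  rw [mul_pow]
  rw [Finset.sum_sigma'] at hθ hblock ⊢
  exact (Finset.sum_mul_sq_le_sq_mul_sq _ _ _).trans
    (mul_le_mul hθ hblock (Finset.sum_nonneg fun _ _ => sq_nonneg _) (sq_nonneg _))

/-- The root `x ^ (1 / (2 * r))` is inverted by the natural power `2 * r`. -/
lemma rpow_one_div_two_mul_pow {x : ℝ} (hx : 0 ≤ x) {r : ℕ} (hr : 1 ≤ r) :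
    (x ^ ((1 : ℝ) / (2 * r))) ^ (2 * r) = x := by
  have h := Real.rpow_inv_natCast_pow hx (n := 2 * r) (by omega)
  simpa using h

/-- The moment-to-complexity step in the proof of Lemma 1: if for every allocation
`(M_1,…,M_P)` with `∑_p M_p = M` and every `p` the Rademacher moment bound
`2^{-N} ∑_σ (∑_{m<M_p} (ψ_{p,m}ᵀσ)²)^r ≤ ((23r/22)·N·B²)^r` holds, then the empirical
Rademacher complexity of `F̂_M` is at most `(C·B/√N)·√(23r/22)·P^{1/(2r)}`. -/
theorem rademacher_of_moment_bound {X : Type*} (P M N : ℕ)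
    (φ : Fin P → ℕ → X → ℝ) (B C : ℝ) (hB : 0 ≤ B) (hC : 0 ≤ C)
    (xs : Fin N → X) (r : ℕ) (hr : 1 ≤ r)
    (hmoment : ∀ Mp : Fin P → ℕ, (∑ p, Mp p) = M → ∀ p,
      (1 / (2 ^ N : ℝ)) *
          ∑ σ : Fin N → Bool,
            (∑ m ∈ Finset.range (Mp p),
                (∑ n, (if σ n then (1 : ℝ) else -1) * φ p m (xs n)) ^ 2) ^ r ≤
        ((23 * (r : ℝ) / 22) * N * B ^ 2) ^ r) :
    empRad N (FhatM P φ C M) xs ≤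
      (C * B / Real.sqrt N) * Real.sqrt (23 * (r : ℝ) / 22) *
        (P : ℝ) ^ ((1 : ℝ) / (2 * r)) := by
  set g : (Fin N → Bool) → Fin P → ℕ → ℝ :=
    fun σ p m => ∑ n, (if σ n then (1 : ℝ) else -1) * φ p m (xs n) with hg
  set S : (Fin N → Bool) → Fin P → ℝ :=
    fun σ p => ∑ m ∈ Finset.range M, g σ p m ^ 2 with hS
  set z : (Fin N → Bool) → ℝ := fun σ => (∑ p, S σ p ^ r) ^ ((1 : ℝ) / (2 * r))
  have hS0 : ∀ σ p, 0 ≤ S σ p := fun σ p => Finset.sum_nonneg fun _ _ => sq_nonneg _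
  have hT0 : ∀ σ, 0 ≤ ∑ p, S σ p ^ r := fun σ =>
    Finset.sum_nonneg fun p _ => pow_nonneg (hS0 σ p) r
  have hz0 : ∀ σ, 0 ≤ z σ := fun σ => Real.rpow_nonneg (hT0 σ) _
  have hzpow : ∀ σ, z σ ^ (2 * r) = ∑ p, S σ p ^ r := fun σ =>
    rpow_one_div_two_mul_pow (hT0 σ) hr
  have hSz : ∀ σ p, S σ p ≤ z σ ^ 2 := fun σ p => by
    refine le_of_pow_le_pow_left₀ (by omega : r ≠ 0) (sq_nonneg _) ?_
    rw [← pow_mul, hzpow]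
    exact Finset.single_le_sum (f := fun p => S σ p ^ r)
      (fun p _ => pow_nonneg (hS0 σ p) r) (Finset.mem_univ p)
  have hsup : ∀ σ : Fin N → Bool,
      sSup ((fun f => ∑ n, (if σ n then (1 : ℝ) else -1) * f (xs n)) '' FhatM P φ C M)
        ≤ C * z σ := by
    intro σ
    refine Real.sSup_le ?_ (mul_nonneg hC (hz0 σ))
    rintro _ ⟨f, ⟨Mp, θ, ν, hM, hν, hν1, hθ, hf⟩, rfl⟩
    have hpair : ∑ n, (if σ n then (1 : ℝ) else -1) * f (xs n)
        = ∑ p, ∑ m ∈ Finset.range (Mp p), θ p m * (√(ν p) * g σ p m) := by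
      simp only [hf, hg, Finset.mul_sum]
      rw [Finset.sum_comm]
      refine Finset.sum_congr rfl fun p _ => ?_
      rw [Finset.sum_comm]
      refine Finset.sum_congr rfl fun m _ => Finset.sum_congr rfl fun n _ => ?_
      ring
    refine hpair.trans_le (sum_mul_sqrt_weight_le Mp θ (g σ) ν hC (hz0 σ) hν hν1 hθ fun p => ?_)
    refine le_trans ?_ (hSz σ p)
    have hMp : Mp p ≤ M := hM ▸ Finset.single_le_sum (fun _ _ => Nat.zero_le _)
      (Finset.mem_univ p)
    exact Finset.sum_le_sum_of_subset_of_nonneg (Finset.range_mono hMp)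
      fun _ _ _ => sq_nonneg _
  -- Allocating the whole budget to one kernel dominates every other allocation.
  have hmom : ∀ p, 1 / (2 ^ N : ℝ) * ∑ σ, S σ p ^ r ≤ ((23 * (r : ℝ) / 22) * N * B ^ 2) ^ r := by
    intro p
    simpa [hS, hg] using hmoment (Pi.single p M) (by simp) p
  set A : ℝ := (23 * (r : ℝ) / 22) * N * B ^ 2 with hA
  have hA0 : 0 ≤ A := by positivity
  have hmean : 1 / (2 ^ N : ℝ) * ∑ σ, z σ ≤ √A * (P : ℝ) ^ ((1 : ℝ) / (2 * r)) := by
    refine le_of_pow_le_pow_left₀ (by omega : 2 * r ≠ 0) (by positivity) ?_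
    rw [mul_pow (√A), rpow_one_div_two_mul_pow (Nat.cast_nonneg P) hr, pow_mul (√A), Real.sq_sqrt hA0]
    have hjensen := Real.pow_arith_mean_le_arith_mean_pow Finset.univ
      (fun _ : Fin N → Bool => 1 / (2 ^ N : ℝ)) z (fun _ _ => by positivity) (by simp)
      (fun σ _ => hz0 σ) (2 * r)
    rw [← Finset.mul_sum, ← Finset.mul_sum] at hjensen
    refine hjensen.trans ?_
    simp only [hzpow]
    rw [Finset.sum_comm, Finset.mul_sum]
    refine (Finset.sum_le_sum fun p _ => hmom p).trans_eq ?_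
    simp [mul_comm]
  rcases Nat.eq_zero_or_pos N with rfl | hN
  · simp [empRad]
  have hN' : (0 : ℝ) < N := Nat.cast_pos.mpr hN
  have hsqrtA : √A = √(23 * (r : ℝ) / 22) * √N * B := by
    rw [hA, Real.sqrt_mul (by positivity), Real.sqrt_mul (by positivity), Real.sqrt_sq hB]
  calc empRad N (FhatM P φ C M) xs
      ≤ (1 / ((N : ℝ) * 2 ^ N)) * ∑ σ, C * z σ :=
        mul_le_mul_of_nonneg_left (Finset.sum_le_sum fun σ _ => hsup σ) (by positivity)
    _ = C / N * (1 / (2 ^ N : ℝ) * ∑ σ, z σ) := by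
        rw [← Finset.mul_sum]
        field_simp
    _ ≤ C / N * (√A * (P : ℝ) ^ ((1 : ℝ) / (2 * r))) :=
        mul_le_mul_of_nonneg_left hmean (by positivity)
    _ = _ := by
        have hNN : (√N : ℝ) / N = 1 / √N := Real.sqrt_div_self'
        rw [hsqrtA]
        linear_combination (C * √(23 * (r : ℝ) / 22) * B * (P : ℝ) ^ ((1 : ℝ) / (2 * r))) * hNN
end

section
/- Let P_{XY} be a probability measure on X × Y and let L : ℝ × Y → ℝ be a loss function that is G-Lipschitz in its first argument, i.e. |L(a,y) − L(b,y)| ≤ G|a−b| for all a,b ∈ ℝ, y ∈ Y; define the risk R(f) = E_{P_{XY}}[L(f(x),y)] (assuming the relevant functions are measurable and the losses integrable). Let f⋆, f̃, M_min, and θ⋆ be as follows: θ⋆ has Σ_{p,m} (θ⋆_{p,m})² ≤ C², ν ∈ Δ_P, f⋆(x) = Σ_{p=1}^P Σ_{m=1}^∞ θ⋆_{p,m} √(ν_p) φ_{p,m}(x), f̃(x) = Σ_{p=1}^P Σ_{m=1}^{M_p} θ⋆_{p,m} √(ν_p) φ_{p,m}(x), and M_min = min_p M_p. Then under Assumption 1,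 R(f̃) − R(f⋆) ≤ G·B·√( Σ_{p=1}^P Σ_{m=M_min}^∞ (θ⋆_{p,m})² ). (This is the spectral-error bound (11) in the proof of Theorem 1.) -/
open MeasureTheory

/-- **Cauchy–Schwarz inequality** for square-summable real sequences. -/
theorem abs_tsum_mul_le_sqrt_mul_sqrt {ι : Type*} {f g : ι → ℝ}
    (hf : Summable fun i => f i ^ 2) (hg : Summable fun i => g i ^ 2) :
    |∑' i, f i * g i| ≤ √(∑' i, f i ^ 2) * √(∑' i, g i ^ 2) := by
  have hbound (s : Finset ι) :
      ∑ i ∈ s, |f i * g i| ≤ √(∑' i, f i ^ 2) * √(∑' i, g i ^ 2) := by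
    have hcs := Real.sum_mul_le_sqrt_mul_sqrt s (fun i => |f i|) (fun i => |g i|)
    simp only [sq_abs, ← abs_mul] at hcs
    refine hcs.trans ?_
    gcongr
    · exact hf.sum_le_tsum s fun i _ => sq_nonneg _
    · exact hg.sum_le_tsum s fun i _ => sq_nonneg _
  have habs : Summable fun i => |f i * g i| :=
    summable_of_sum_le (fun i => abs_nonneg _) hbound
  have hnorm := norm_tsum_le_tsum_norm (f := fun i => f i * g i)
    (by simpa only [Real.norm_eq_abs] using habs)
  simp only [Real.norm_eq_abs] at hnorm
  exact hnorm.trans (habs.tsum_le_of_sum_le hbound)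

/-- The product of two square-summable real sequences is summable. -/
theorem summable_mul_of_summable_sq {ι : Type*} {f g : ι → ℝ}
    (hf : Summable fun i => f i ^ 2) (hg : Summable fun i => g i ^ 2) :
    Summable fun i => f i * g i := by
  refine Summable.of_norm_bounded (hf.add hg) fun i => ?_
  rw [Real.norm_eq_abs, abs_le]
  constructor <;> nlinarith [sq_nonneg (f i + g i), sq_nonneg (f i - g i)]

/-- Truncating the pairing of two square-summable sequences at `M ≥ N` costs at most the
`ℓ²` norm of the tail of the first from `N` on times the `ℓ²` norm of the second. -/
theorem abs_sum_range_sub_tsum_mul_le {f g : ℕ → ℝ}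
    (hf : Summable fun m => f m ^ 2) (hg : Summable fun m => g m ^ 2)
    {N M : ℕ} (hNM : N ≤ M) :
    |∑ m ∈ Finset.range M, f m * g m - ∑' m, f m * g m| ≤
      √(∑' m, if N ≤ m then f m ^ 2 else 0) * √(∑' m, g m ^ 2) := by
  have hinj : Function.Injective fun m : ℕ => m + M := add_left_injective M
  have htail : Summable fun m => if N ≤ m then f m ^ 2 else 0 :=
    hf.of_nonneg_of_le (fun m => by positivity)
      (fun m => by split_ifs <;> first | exact le_rfl | positivity)
  have hle_f : ∑' m, f (m + M) ^ 2 ≤ ∑' m, if N ≤ m then f m ^ 2 else 0 := by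
    have h := tsum_comp_le_tsum_of_inj htail (fun m => by positivity) hinj
    simpa [Function.comp_def, hNM.trans (Nat.le_add_left M _)] using h
  have hle_g : ∑' m, g (m + M) ^ 2 ≤ ∑' m, g m ^ 2 :=
    tsum_comp_le_tsum_of_inj hg (fun m => sq_nonneg _) hinj
  rw [← (summable_mul_of_summable_sq hf hg).sum_add_tsum_nat_add M, sub_add_cancel_left, abs_neg]
  refine (abs_tsum_mul_le_sqrt_mul_sqrt (hf.comp_injective hinj) (hg.comp_injective hinj)).trans ?_
  gcongr

/-- The spectral-error bound (11) in the proof of Theorem 1: with a `G`-Lipschitz loss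
`L` in its first argument, risk `R(f) = E_{P_{XY}}[L(f(x),y)]`, coefficients `θ⋆` with
`∑_{p,m}(θ⋆_{p,m})² ≤ C²`, weights `ν ∈ Δ_P`, limit `f⋆` and its truncation `f̃` with
allocation `(M_1,…,M_P)` of minimum `M_min`, one has, under Assumption 1,
`R(f̃) − R(f⋆) ≤ G·B·√(∑_p ∑_{m ≥ M_min} (θ⋆_{p,m})²)`. -/
theorem risk_truncation_bound {X Y : Type*} [MeasurableSpace X] [MeasurableSpace Y]
    (μ : Measure (X × Y)) [IsProbabilityMeasure μ]
    (L : ℝ → Y → ℝ) (G : ℝ) (hG : 0 ≤ G)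
    (hLip : ∀ (a b : ℝ) (y : Y), |L a y - L b y| ≤ G * |a - b|)
    (P : ℕ) (φ : Fin P → ℕ → X → ℝ) (B C : ℝ) (hB : 0 ≤ B) (hC : 0 ≤ C)
    (hφsum : ∀ p x, Summable fun m => (φ p m x) ^ 2)
    (hφB : ∀ p x, (∑' m, (φ p m x) ^ 2) ≤ B ^ 2)
    (θ : Fin P → ℕ → ℝ) (hθsum : ∀ p, Summable fun m => (θ p m) ^ 2)
    (hθC : (∑ p, ∑' m, (θ p m) ^ 2) ≤ C ^ 2)
    (ν : Fin P → ℝ) (hν0 : ∀ p, 0 ≤ ν p) (hν1 : (∑ p, ν p) = 1)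
    (Mp : Fin P → ℕ) (Mmin : ℕ)
    (hMminLe : ∀ p, Mmin ≤ Mp p) (hMminEq : ∃ p, Mp p = Mmin)
    (fstar ftil : X → ℝ)
    (hfstar : ∀ x, fstar x = ∑ p, ∑' m, θ p m * Real.sqrt (ν p) * φ p m x)
    (hftil : ∀ x, ftil x = ∑ p, ∑ m ∈ Finset.range (Mp p),
        θ p m * Real.sqrt (ν p) * φ p m x)
    (hIntTil : Integrable (fun z : X × Y => L (ftil z.1) z.2) μ)
    (hIntStar : Integrable (fun z : X × Y => L (fstar z.1) z.2) μ) :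
    (∫ z, L (ftil z.1) z.2 ∂μ) - (∫ z, L (fstar z.1) z.2 ∂μ) ≤
      G * B * Real.sqrt (∑ p, ∑' m, if Mmin ≤ m then (θ p m) ^ 2 else 0) := by
  have hdiff (x : X) : |ftil x - fstar x| ≤
      B * √(∑ p, ∑' m, if Mmin ≤ m then (θ p m) ^ 2 else 0) := by
    have hsplit : ftil x - fstar x = ∑ p, √(ν p) *
        (∑ m ∈ Finset.range (Mp p), θ p m * φ p m x - ∑' m, θ p m * φ p m x) := by
      rw [hftil, hfstar, ← Finset.sum_sub_distrib]
      refine Finset.sum_congr rfl fun p _ => ?_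
      rw [mul_sub, Finset.mul_sum, ← tsum_mul_left]
      congr 1
      · exact Finset.sum_congr rfl fun m _ => by ring
      · exact tsum_congr fun m => by ring
    have hcs := Real.sum_sqrt_mul_sqrt_le Finset.univ hν0
      (g := fun p => ∑' m, if Mmin ≤ m then (θ p m) ^ 2 else 0)
      (fun p => tsum_nonneg fun m => by positivity)
    rw [hν1, Real.sqrt_one, one_mul] at hcs
    calc |ftil x - fstar x|
        ≤ ∑ p, √(ν p) * (√(∑' m, if Mmin ≤ m then (θ p m) ^ 2 else 0) * B) := by
          rw [hsplit]
          refine (Finset.abs_sum_le_sum_abs _ _).trans (Finset.sum_le_sum fun p _ => ?_)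
          rw [abs_mul, abs_of_nonneg (Real.sqrt_nonneg _)]
          refine mul_le_mul_of_nonneg_left ?_ (Real.sqrt_nonneg _)
          refine (abs_sum_range_sub_tsum_mul_le (hθsum p) (hφsum p x) (hMminLe p)).trans ?_
          exact mul_le_mul_of_nonneg_left (Real.sqrt_le_iff.2 ⟨hB, hφB p x⟩) (Real.sqrt_nonneg _)
      _ = B * ∑ p, √(ν p) * √(∑' m, if Mmin ≤ m then (θ p m) ^ 2 else 0) := by
          rw [Finset.mul_sum]
          exact Finset.sum_congr rfl fun p _ => by ring
      _ ≤ _ := mul_le_mul_of_nonneg_left hcs hB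
  rw [← integral_sub hIntTil hIntStar]
  refine (integral_mono (hIntTil.sub hIntStar) (integrable_const _) fun z => ?_).trans_eq
    (by rw [integral_const, probReal_univ, one_smul])
  calc L (ftil z.1) z.2 - L (fstar z.1) z.2
      ≤ G * |ftil z.1 - fstar z.1| := (le_abs_self _).trans (hLip _ _ _)
    _ ≤ G * (B * √(∑ p, ∑' m, if Mmin ≤ m then (θ p m) ^ 2 else 0)) :=
        mul_le_mul_of_nonneg_left (hdiff z.1) hG
    _ = _ := (mul_assoc _ _ _).symm
end

section
/- Fully corrective greedy convergence (Theorem 2 of the paper, with the logarithmic factor the paper disregards made explicit): Let R̂ : ℝ^{M₀} → ℝ be differentiable, μ-strongly convex and such that the pointwise loss it averages is convex and β-smooth (in particular R̂ is β'-smooth along coordinates with β' ≤ β). Let the iterates (θ^{(t)})_{t≥0} and supports (I^{(t)})_{t≥1} be generated by the fully corrective greedy scheme: θ^{(0)} = 0, I^{(1)} = ∅, and for each t ≥ 1, J^{(t)} maximizes |⟨∇R̂(θ^{(t−1)}), e_j⟩| over j ∈ {1,…,M₀}, I^{(t+1)} = I^{(t)} ∪ {J^{(t)}}, and θ^{(t)}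 minimizes R̂ over {θ ∈ ℝ^{M₀} : supp(θ) ⊆ I^{(t+1)}}. Then for every ε > 0 and every θ̄ ∈ ℝ^{M₀}, if t ≥ ‖θ̄‖₀ · (β/μ) · log( (R̂(0) − R̂(θ̄))/ε ), the iterate satisfies R̂(θ^{(t)}) − R̂(θ̄) ≤ ε, where ‖θ̄‖₀ is the number of nonzero entries of θ̄. -/
open scoped RealInnerProductSpace

/-- A coordinate gradient step of length `1 / β` decreases a `β`-smooth function by at least
`(gradient f x j) ^ 2 / (2 * β)`. -/
theorem coordinate_step_le {n : ℕ} {f : EuclideanSpace ℝ (Fin n) → ℝ} {β : ℝ} (hβ : 0 < β)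
    (hsmooth : ∀ x y : EuclideanSpace ℝ (Fin n),
      f y ≤ f x + ⟪gradient f x, y - x⟫ + β / 2 * ‖y - x‖ ^ 2)
    (x : EuclideanSpace ℝ (Fin n)) (j : Fin n) :
    f (x + EuclideanSpace.single j (-(gradient f x j / β))) ≤
      f x - gradient f x j ^ 2 / (2 * β) := by
  refine (hsmooth x _).trans_eq ?_
  rw [add_sub_cancel_left, EuclideanSpace.inner_single_right, PiLp.norm_single,
    Real.norm_eq_abs, sq_abs]
  simp only [conj_trivial]
  field_simp
  ring

/-- If `f` is smooth and `x` minimizes `f` over the vectors supported on `S`, then the gradient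
of `f` at `x` vanishes on `S`. -/
theorem gradient_apply_eq_zero_of_minimizes_on_support {n : ℕ}
    {f : EuclideanSpace ℝ (Fin n) → ℝ} {β : ℝ} (hβ : 0 < β)
    (hsmooth : ∀ x y : EuclideanSpace ℝ (Fin n),
      f y ≤ f x + ⟪gradient f x, y - x⟫ + β / 2 * ‖y - x‖ ^ 2)
    {x : EuclideanSpace ℝ (Fin n)} {S : Finset (Fin n)} (hx : ∀ j, x j ≠ 0 → j ∈ S)
    (hmin : ∀ v : EuclideanSpace ℝ (Fin n), (∀ j, v j ≠ 0 → j ∈ S) → f x ≤ f v)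
    {j : Fin n} (hj : j ∈ S) : gradient f x j = 0 := by
  have hstep := coordinate_step_le hβ hsmooth x j
  have hle := hmin (x + EuclideanSpace.single j (-(gradient f x j / β))) fun i hi => by
    by_cases hij : i = j
    · exact hij ▸ hj
    · exact hx i (by simpa [hij] using hi)
  have hdiv : gradient f x j ^ 2 / (2 * β) ≤ 0 := by linarith
  rw [div_le_iff₀ (by positivity), zero_mul] at hdiv
  exact pow_eq_zero_iff two_ne_zero |>.1 (le_antisymm hdiv (sq_nonneg _))

/-- If the gradient of a `μ`-strongly convex `f` vanishes on a set `S` supporting `x` and its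
entries are bounded by `G`, then `f x` exceeds `f y` by at most `‖y‖₀ * G ^ 2 / (2 * μ)`. -/
theorem sub_le_card_support_mul_sq_div {n : ℕ} {f : EuclideanSpace ℝ (Fin n) → ℝ} {μ : ℝ}
    (hμ : 0 < μ)
    (hstrong : ∀ x y : EuclideanSpace ℝ (Fin n),
      f x + ⟪gradient f x, y - x⟫ + μ / 2 * ‖y - x‖ ^ 2 ≤ f y)
    {x : EuclideanSpace ℝ (Fin n)} {S : Finset (Fin n)} (hx : ∀ j, x j ≠ 0 → j ∈ S)
    (hgrad : ∀ j ∈ S, gradient f x j = 0) {G : ℝ} (hG : ∀ j, |gradient f x j| ≤ |G|)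
    (y : EuclideanSpace ℝ (Fin n)) :
    f x - f y ≤ ((Finset.univ.filter fun j => y j ≠ 0).card : ℝ) * (G ^ 2 / (2 * μ)) := by
  have hxy := hstrong x y
  rw [EuclideanSpace.norm_sq_eq, PiLp.inner_apply, Finset.mul_sum, add_assoc,
    ← Finset.sum_add_distrib] at hxy
  have hsum : -(((Finset.univ.filter fun j => y j ≠ 0).card : ℝ) * (G ^ 2 / (2 * μ))) ≤
      ∑ j, (⟪gradient f x j, (y - x) j⟫ + μ / 2 * ‖(y - x) j‖ ^ 2) := by
    rw [← nsmul_eq_mul, ← Finset.sum_const, Finset.sum_filter, ← Finset.sum_neg_distrib]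
    refine Finset.sum_le_sum fun j _ => ?_
    have hinner : ⟪gradient f x j, (y - x) j⟫ = gradient f x j * (y j - x j) := by
      simp [mul_comm]
    rw [hinner, Real.norm_eq_abs, sq_abs, PiLp.sub_apply]
    split_ifs with hyj
    · have hsq : gradient f x j ^ 2 ≤ G ^ 2 := sq_le_sq.2 (hG j)
      have hid : gradient f x j * (y j - x j) + μ / 2 * (y j - x j) ^ 2 =
          (μ * (y j - x j) + gradient f x j) ^ 2 / (2 * μ) - gradient f x j ^ 2 / (2 * μ) := by
        field_simp
        ring
      have hnonneg : 0 ≤ (μ * (y j - x j) + gradient f x j) ^ 2 / (2 * μ) := by positivity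
      have hdiv : gradient f x j ^ 2 / (2 * μ) ≤ G ^ 2 / (2 * μ) := by gcongr
      linarith
    · have hzero : gradient f x j * (y j - x j) = 0 := by
        by_cases hj : j ∈ S
        · rw [hgrad j hj, zero_mul]
        · rw [not_not.1 hyj, not_not.1 (mt (hx j) hj), sub_zero, mul_zero]
      rw [hzero]
      have : 0 ≤ μ / 2 * (y j - x j) ^ 2 := by positivity
      linarith
  linarith

/-- A nonincreasing sequence contracting by the factor `1 - c` at each step decays like
`exp (-(c * t))`. -/
theorem le_mul_exp_of_contraction {δ : ℕ → ℝ} {c : ℝ} (h0 : 0 ≤ δ 0)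
    (hanti : ∀ t, δ (t + 1) ≤ δ t) (hδ : ∀ t, δ (t + 1) ≤ δ t * (1 - c)) (t : ℕ) :
    δ t ≤ δ 0 * Real.exp (-(c * t)) := by
  induction t with
  | zero => simp
  | succ t ih =>
    rcases le_total (δ t) 0 with hneg | hpos
    · exact ((hanti t).trans hneg).trans (by positivity)
    · calc δ (t + 1) ≤ δ t * (1 - c) := hδ t
        _ ≤ δ t * Real.exp (-c) := by gcongr; exact Real.one_sub_le_exp_neg c
        _ ≤ δ 0 * Real.exp (-(c * t)) * Real.exp (-c) := by gcongr
        _ = δ 0 * Real.exp (-(c * (t + 1 : ℕ))) := by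
          rw [mul_assoc, ← Real.exp_add]
          congr 2
          push_cast
          ring

/-- Fully corrective greedy convergence (Theorem 2 of the paper, with the logarithmic
factor made explicit): if `R̂ : ℝ^{M₀} → ℝ` is differentiable, `μ`-strongly convex and
`β`-smooth, and the iterates `θ^{(t)}` are generated by the fully corrective greedy
scheme (select the coordinate maximizing `|⟨∇R̂(θ^{(t−1)}), e_j⟩|`, add it to the active
set, and fully minimize `R̂` over vectors supported on the active set), then for every
`ε > 0` and `θ̄`, once `t ≥ ‖θ̄‖₀·(β/μ)·log((R̂(0) − R̂(θ̄))/ε)` one has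
`R̂(θ^{(t)}) − R̂(θ̄) ≤ ε`. -/
theorem fully_corrective_greedy_convergence (M₀ : ℕ)
    (Rhat : EuclideanSpace ℝ (Fin M₀) → ℝ)
    (μ β : ℝ) (hμ : 0 < μ) (hβ : 0 < β)
    (hdiff : Differentiable ℝ Rhat)
    (hstrong : ∀ x y : EuclideanSpace ℝ (Fin M₀),
      Rhat x + ⟪gradient Rhat x, y - x⟫ + μ / 2 * ‖y - x‖ ^ 2 ≤ Rhat y)
    (hsmooth : ∀ x y : EuclideanSpace ℝ (Fin M₀),
      Rhat y ≤ Rhat x + ⟪gradient Rhat x, y - x⟫ + β / 2 * ‖y - x‖ ^ 2)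
    (θ : ℕ → EuclideanSpace ℝ (Fin M₀)) (I : ℕ → Finset (Fin M₀)) (J : ℕ → Fin M₀)
    (hθ0 : θ 0 = 0) (hI1 : I 1 = ∅)
    (hJ : ∀ t, 1 ≤ t → ∀ j : Fin M₀,
      |⟪gradient Rhat (θ (t - 1)), EuclideanSpace.single j 1⟫| ≤
        |⟪gradient Rhat (θ (t - 1)), EuclideanSpace.single (J t) 1⟫|)
    (hI : ∀ t, 1 ≤ t → I (t + 1) = insert (J t) (I t))
    (hsupp : ∀ t, 1 ≤ t → ∀ j : Fin M₀, θ t j ≠ 0 → j ∈ I (t + 1))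
    (hmin : ∀ t, 1 ≤ t → ∀ v : EuclideanSpace ℝ (Fin M₀),
      (∀ j : Fin M₀, v j ≠ 0 → j ∈ I (t + 1)) → Rhat (θ t) ≤ Rhat v)
    (ε : ℝ) (hε : 0 < ε) (θbar : EuclideanSpace ℝ (Fin M₀)) (t : ℕ)
    (ht : ((Finset.univ.filter fun j => θbar j ≠ 0).card : ℝ) * (β / μ) *
        Real.log ((Rhat 0 - Rhat θbar) / ε) ≤ (t : ℝ)) :
    Rhat (θ t) - Rhat θbar ≤ ε := by
  have hsupp' : ∀ s, ∀ j, θ s j ≠ 0 → j ∈ I (s + 1) := by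
    rintro (_ | s) j hj
    · simp [hθ0] at hj
    · exact hsupp (s + 1) (by omega) j hj
  have hmin' : ∀ s, ∀ v : EuclideanSpace ℝ (Fin M₀),
      (∀ j, v j ≠ 0 → j ∈ I (s + 1)) → Rhat (θ s) ≤ Rhat v := by
    rintro (_ | s) v hv
    · have : v = 0 := by
        ext j
        by_contra hj
        simpa [hI1] using hv j hj
      rw [hθ0, this]
    · exact hmin (s + 1) (by omega) v hv
  have hgrad : ∀ s, ∀ j ∈ I (s + 1), gradient Rhat (θ s) j = 0 := fun s j hj =>
    gradient_apply_eq_zero_of_minimizes_on_support hβ hsmooth (hsupp' s) (hmin' s) hj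
  have hG : ∀ s j, |gradient Rhat (θ s) j| ≤ |gradient Rhat (θ s) (J (s + 1))| := fun s j => by
    simpa only [EuclideanSpace.inner_single_right, conj_trivial, one_mul, Nat.add_sub_cancel]
      using hJ (s + 1) (by omega) j
  have hprogress : ∀ s, Rhat (θ (s + 1)) ≤
      Rhat (θ s) - gradient Rhat (θ s) (J (s + 1)) ^ 2 / (2 * β) := fun s => by
    refine (hmin' (s + 1) _ fun i hi => ?_).trans (coordinate_step_le hβ hsmooth (θ s) (J (s + 1)))
    rw [hI (s + 1) (by omega), Finset.mem_insert]
    by_cases hij : i = J (s + 1)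
    · exact Or.inl hij
    · exact Or.inr (hsupp' s i (by simpa [hij] using hi))
  have hanti : ∀ s, Rhat (θ (s + 1)) ≤ Rhat (θ s) := fun s =>
    (hprogress s).trans (sub_le_self _ (by positivity))
  rcases le_or_gt (Rhat 0 - Rhat θbar) ε with hsmall | hlarge
  · have := antitone_nat_of_succ_le (f := fun s => Rhat (θ s)) hanti (Nat.zero_le t)
    simp only [hθ0] at this
    linarith
  set k : ℝ := ((Finset.univ.filter fun j => θbar j ≠ 0).card : ℝ) with hk
  have hkpos : 0 < k := by
    rw [hk, Nat.cast_pos, Finset.card_pos]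
    by_contra hempty
    have hbar : θbar = 0 := by
      ext j
      by_contra hj
      exact hempty ⟨j, by simpa using hj⟩
    rw [hbar, sub_self] at hlarge
    exact hlarge.not_gt hε
  have hcontract : ∀ s, Rhat (θ (s + 1)) - Rhat θbar ≤
      (Rhat (θ s) - Rhat θbar) * (1 - μ / (k * β)) := fun s => by
    have hgap := sub_le_card_support_mul_sq_div hμ hstrong (hsupp' s) (hgrad s) (hG s) θbar
    rw [← hk] at hgap
    have hscaled := mul_le_mul_of_nonneg_right hgap (show 0 ≤ μ / (k * β) by positivity)
    have hid : k * (gradient Rhat (θ s) (J (s + 1)) ^ 2 / (2 * μ)) * (μ / (k * β)) =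
        gradient Rhat (θ s) (J (s + 1)) ^ 2 / (2 * β) := by
      field_simp
    linarith [hprogress s]
  have hpos : 0 < Rhat 0 - Rhat θbar := hε.trans hlarge
  have hdecay := le_mul_exp_of_contraction (δ := fun s => Rhat (θ s) - Rhat θbar)
    (by simpa only [hθ0] using hpos.le) (fun s => sub_le_sub_right (hanti s) _) hcontract t
  simp only [hθ0] at hdecay
  have hlog : Real.log ((Rhat 0 - Rhat θbar) / ε) ≤ μ / (k * β) * t := by
    have hscaled := mul_le_mul_of_nonneg_left ht (show 0 ≤ μ / (k * β) by positivity)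
    refine le_trans (le_of_eq ?_) hscaled
    field_simp
  refine hdecay.trans ?_
  rw [Real.log_le_iff_le_exp (by positivity), div_le_iff₀ hε] at hlog
  rw [Real.exp_neg, ← div_eq_mul_inv, div_le_iff₀ (Real.exp_pos _), mul_comm ε]
  exact hlog
end
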